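/- Let k ≥ 1 and t ≥ 0, and let a_0, a_1, …, a_t be elements of a commutative ring with unity. Then for all n ≥ 1, per( (Σ_{i=0}^{t} a_i · (P_n(x))^i) ⊗ J_k ) = Σ_{r=0}^{kt} Tr( (Π_{r,t}^{[k]}(a_0, a_1, …, a_t))^n ) · x^r, as polynomials in x. -/

import Mathlib

open scoped BigOperators Classical

/-- The index set `G_{r,t}^{[k]}`: vectors `(l_1, …, l_t)` with `0 ≤ l_i ≤ k` and
`l_1 + ⋯ + l_t = r`. -/
def GIdx (k r t : ℕ) := {l : Fin t → Fin (k + 1) // (∑ i, (l i : ℕ)) = r}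

noncomputable instance (k r t : ℕ) : Fintype (GIdx k r t) := by
  unfold GIdx; infer_instance

instance (k r t : ℕ) : DecidableEq (GIdx k r t) := by
  unfold GIdx; infer_instance

/-- The square matrix `Π_{r,t}^{[k]}(a_0, a_1, …, a_t)`, with rows and columns indexed by
`G_{r,t}^{[k]}`.  For `t ≥ 1` the `(α,β)` entry, for `α = (l_1, …, l_t)`, equals
`k!·C(k, l_t+p_1+⋯+p_{t−1})·C(l_1,p_1)⋯C(l_{t−1},p_{t−1})·a_0^{k−l_t−Σp}·a_1^{p_1}⋯a_{t−1}^{p_{t−1}}·a_t^{l_t}`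
if `β = (l_t+p_1+⋯+p_{t−1}, l_1−p_1, …, l_{t−1}−p_{t−1})` for (necessarily unique) integers
`0 ≤ p_i ≤ l_i` with `p_1+⋯+p_{t−1} ≤ k−l_t`, and `0` otherwise; `Π_{0,0}^{[k]}(a_0) = k!·a_0^k`. -/
noncomputable def PiMat {R : Type*} [CommRing R] (k t r : ℕ) (a : ℕ → R) :
    Matrix (GIdx k r t) (GIdx k r t) R :=
  Matrix.of fun α β =>
    if ht : 0 < t then
      ∑ p : Fin t → Fin (k + 1),
        if (∀ i : Fin t, i.val + 1 < t → (p i : ℕ) ≤ (α.1 i : ℕ)) ∧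
            (∀ i : Fin t, ¬ i.val + 1 < t → (p i : ℕ) = 0) ∧
            (α.1 ⟨t - 1, Nat.sub_lt ht one_pos⟩ : ℕ) + (∑ i, (p i : ℕ)) ≤ k ∧
            (β.1 ⟨0, ht⟩ : ℕ) = (α.1 ⟨t - 1, Nat.sub_lt ht one_pos⟩ : ℕ) + ∑ i, (p i : ℕ) ∧
            (∀ j : Fin t, 0 < j.val →
              (β.1 j : ℕ) =
                (α.1 ⟨j.val - 1, lt_of_le_of_lt (Nat.pred_le _) j.isLt⟩ : ℕ) -
                  (p ⟨j.val - 1, lt_of_le_of_lt (Nat.pred_le _) j.isLt⟩ : ℕ)) then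
          (Nat.factorial k : R) *
            (Nat.choose k ((α.1 ⟨t - 1, Nat.sub_lt ht one_pos⟩ : ℕ) + ∑ i, (p i : ℕ)) : R) *
            (∏ i : Fin t, if i.val + 1 < t then (Nat.choose (α.1 i : ℕ) (p i : ℕ) : R) else 1) *
            a 0 ^ (k - (α.1 ⟨t - 1, Nat.sub_lt ht one_pos⟩ : ℕ) - ∑ i, (p i : ℕ)) *
            (∏ i : Fin t, if i.val + 1 < t then a (i.val + 1) ^ (p i : ℕ) else 1) *
            a t ^ (α.1 ⟨t - 1, Nat.sub_lt ht one_pos⟩ : ℕ)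
        else 0
    else (Nat.factorial k : R) * a 0 ^ k

open Kronecker

/-- The `n × n` matrix `P_n(x)`, with `(i,j)` entry `1` if `j − i = 1`, entry `x` if
`i = n` and `j = 1` (in `1`-based indexing), and `0` otherwise. -/
def PmatX {R : Type*} [CommRing R] (n : ℕ) (x : R) : Matrix (Fin n) (Fin n) R :=
  Matrix.of fun i j =>
    if (j : ℕ) = (i : ℕ) + 1 then 1
    else if (i : ℕ) = n - 1 ∧ (j : ℕ) = 0 then x
    else 0

/-- The permanent of a square matrix: `per(B) = ∑_{σ ∈ Sym} ∏_i B i (σ i)`. -/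
noncomputable def sqPer {R : Type*} [CommRing R] {ι : Type*} [Fintype ι] [DecidableEq ι]
    (M : Matrix ι ι R) : R :=
  ∑ σ : Equiv.Perm ι, ∏ i, M i (σ i)

/-
Expanding a permanent with repeated columns shows that `per(M ⊗ J_k)` is `(k!)^n` times the
coefficient of `∏ y_j ^ k` in the product of the `k`-th powers of the row forms `∑ M_ij y_j`.
For `M = ∑ a_s P_n(x)^s`, the matrix `P_n(x)` is a diagonal matrix times a cyclic permutation `τ`,
so the `i`-th row form is `∑ a_s x^(…) y_{τ^s i}`, and its `k`-th power is a sum over the chains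
`k ≥ v_1 ≥ ⋯ ≥ v_t ≥ 0` of tail sums of multinomial exponents. Moving the `s`-th tail sum of row `i`
to the row `τ^s i` regroups the product over all rows into weights of closed walks of length `n`
on vectors `(l_1, …, l_t)`, and `k!` times the weight of a step is an entry of `Π`. Extracting
the coefficient of `∏ y_j ^ k` forces `l_1 + ⋯ + l_t` to be constant along the walk; the constant
is the exponent `r` of `x`, and the walks of a given `r` add up to a trace.
-/

theorem sum_single_one_eq_iff {ι B : Type*} [Fintype ι] [DecidableEq B] (f g : ι → B) :
    (∑ x, Finsupp.single (f x) 1 : B →₀ ℕ) = ∑ x, Finsupp.single (g x) 1 ↔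
      ∀ j, Fintype.card {x // f x = j} = Fintype.card {x // g x = j} := by
  simp only [Finsupp.ext_iff, Finsupp.finsetSum_apply, Finsupp.single_apply,
    Fintype.card_subtype, Finset.card_filter]

theorem card_perm_comp_eq {ι B : Type*} [Fintype ι] [DecidableEq ι] [Fintype B] [DecidableEq B]
    (f g : ι → B) :
    Fintype.card {σ : Equiv.Perm ι // g ∘ σ = f} =
      if ∀ j, Fintype.card {x // f x = j} = Fintype.card {x // g x = j} then
        ∏ j, (Fintype.card {x // g x = j}).factorial
      else 0 := by
  split_ifs with h
  · let e : Equiv.Perm ι := Equiv.ofFiberEquiv fun j => Fintype.equivOfCardEq (h j)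
    have he : g ∘ e = f := funext fun x => Equiv.ofFiberEquiv_map _ x
    rw [← DomMulAct.stabilizer_card g]
    refine Fintype.card_congr ((Equiv.mulRight e⁻¹).subtypeEquiv fun σ => ?_)
    rw [← he, Equiv.coe_mulRight, Equiv.Perm.coe_mul, ← Function.comp_assoc, Equiv.Perm.inv_def,
      Equiv.comp_symm_eq]
  · rw [Fintype.card_eq_zero_iff]
    refine ⟨fun ⟨σ, hσ⟩ => h fun j => Fintype.card_congr (σ.subtypeEquiv fun x => ?_)⟩
    rw [← hσ, Function.comp_apply]

section Permanent

open MvPolynomial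

variable {S : Type*} [CommRing S] {A B ι : Type*} [Fintype A] [Fintype B] [Fintype ι]
  [DecidableEq A] [DecidableEq ι]

theorem prod_linearForm_eq_sum_monomial (M : Matrix ι B S) :
    ∏ x, ∑ j, C (M x j) * X j =
      ∑ f : ι → B, monomial (∑ x, Finsupp.single (f x) 1) (∏ x, M x (f x)) := by
  simp only [C_mul_X_eq_monomial, Fintype.prod_sum, monomial_sum_prod]

theorem sqPer_submatrix_eq_coeff [DecidableEq B] (M : Matrix ι B S) (g : ι → B) :
    sqPer (M.submatrix id g) =
      (∏ j, ((Fintype.card {x // g x = j}).factorial : S)) *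
        (∏ x, ∑ j, C (M x j) * X j).coeff
          (∑ x, Finsupp.single (g x) 1) := by
  calc sqPer (M.submatrix id g)
      = ∑ f : ι → B, ∑ σ with g ∘ ⇑(σ : Equiv.Perm ι) = f, ∏ x, M x (g (σ x)) :=
        (Finset.sum_fiberwise _ (fun σ : Equiv.Perm ι => g ∘ σ) _).symm
    _ = ∑ f : ι → B, Fintype.card {σ : Equiv.Perm ι // g ∘ σ = f} • ∏ x, M x (f x) := by
        refine Finset.sum_congr rfl fun f _ => ?_
        rw [Fintype.card_subtype, ← Finset.sum_const]
        refine Finset.sum_congr rfl fun σ hσ => ?_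
        rw [← (Finset.mem_filter.1 hσ).2]; rfl
    _ = _ := by
        rw [prod_linearForm_eq_sum_monomial, coeff_sum, Finset.mul_sum]
        refine Finset.sum_congr rfl fun f _ => ?_
        simp only [card_perm_comp_eq, coeff_monomial, sum_single_one_eq_iff]
        split_ifs <;> simp

theorem sqPer_kronecker_ones (M : Matrix A A S) (k : ℕ) :
    sqPer (M ⊗ₖ Matrix.of fun (_ : Fin k) (_ : Fin k) => (1 : S)) =
      (k.factorial : S) ^ Fintype.card A *
        (∏ i, (∑ j, C (M i j) * X j) ^ k).coeff
          (Finsupp.equivFunOnFinite.symm fun _ => k) := by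
  have hsub : M ⊗ₖ Matrix.of (fun (_ : Fin k) (_ : Fin k) => (1 : S)) =
      (M.submatrix Prod.fst id).submatrix id Prod.fst := by
    ext; simp
  have hcard (j : A) : Fintype.card {x : A × Fin k // x.1 = j} = k := by
    rw [Fintype.card_congr (Equiv.prodSubtypeFstEquivSubtypeProd (p := (· = j)))]
    simp
  have hdeg : (∑ x : A × Fin k, Finsupp.single x.1 1 : A →₀ ℕ) =
      Finsupp.equivFunOnFinite.symm fun _ => k := by
    ext j
    simp [Fintype.sum_prod_type, Finsupp.finsetSum_apply, Finsupp.single_apply]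
  rw [hsub, sqPer_submatrix_eq_coeff, hdeg, Fintype.prod_prod_type]
  simp [hcard]

end Permanent

theorem trace_pow_mul_eq_sum_walks {S ι : Type*} [CommSemiring S] [Fintype ι] [DecidableEq ι]
    (M N : Matrix ι ι S) (m : ℕ) :
    (M ^ m * N).trace = ∑ w : Fin (m + 1) → ι,
      (∏ i : Fin m, M (w i.castSucc) (w i.succ)) * N (w (Fin.last m)) (w 0) := by
  induction m generalizing N with
  | zero =>
    rw [← (Equiv.funUnique (Fin 1) ι).symm.sum_comp]
    simp [Matrix.trace]
  | succ m ih =>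
    rw [pow_succ, mul_assoc, ih, ← (Fin.snocEquiv fun _ : Fin (m + 2) => ι).sum_comp,
      Fintype.sum_prod_type_right]
    refine Finset.sum_congr rfl fun w _ => ?_
    simp only [Fin.snocEquiv, Equiv.coe_fn_mk, Matrix.mul_apply, Finset.mul_sum,
      Fin.prod_univ_castSucc (n := m), Fin.succ_castSucc, Fin.snoc_castSucc, Fin.succ_last,
      Fin.snoc_last, mul_assoc, ← Fin.castSucc_zero]

theorem trace_pow_succ_eq_sum_closed_walks {S ι : Type*} [CommSemiring S] [Fintype ι]
    [DecidableEq ι] (M : Matrix ι ι S) (m : ℕ) :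
    (M ^ (m + 1)).trace =
      ∑ w : Fin (m + 1) → ι, ∏ i, M (w i) (w (finRotate (m + 1) i)) := by
  simp only [pow_succ, trace_pow_mul_eq_sum_walks, Fin.prod_univ_castSucc, finRotate_apply,
    Fin.coeSucc_eq_succ, Fin.last_add_one]

theorem diagonal_mul_permMatrix_apply {S A : Type*} [CommSemiring S] [Fintype A] [DecidableEq A]
    (d : A → S) (τ : Equiv.Perm A) (i j : A) :
    (Matrix.diagonal d * τ.permMatrix S) i j = if τ i = j then d i else 0 := by
  simp [Matrix.diagonal_mul, PEquiv.toMatrix_apply]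

theorem diagonal_mul_permMatrix_pow {S A : Type*} [CommSemiring S] [Fintype A] [DecidableEq A]
    (d : A → S) (τ : Equiv.Perm A) (s : ℕ) :
    (Matrix.diagonal d * τ.permMatrix S) ^ s =
      Matrix.diagonal (fun i => ∏ u ∈ Finset.range s, d ((τ ^ u) i)) * (τ ^ s).permMatrix S := by
  induction s with
  | zero => simp
  | succ s ih =>
    ext i j
    rw [pow_succ, ih, Matrix.mul_apply]
    simp only [diagonal_mul_permMatrix_apply, ite_mul, zero_mul, Finset.sum_ite_eq,
      Finset.mem_univ, if_true]
    rw [mul_ite, mul_zero, Finset.prod_range_succ, pow_succ', Equiv.Perm.mul_apply]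

theorem pmatX_succ_eq_diagonal_mul_permMatrix {S : Type*} [CommRing S] (m : ℕ) (x : S) :
    PmatX (m + 1) x =
      Matrix.diagonal (fun i => if i = Fin.last m then x else 1) *
        (finRotate (m + 1)).permMatrix S := by
  ext i j
  rw [diagonal_mul_permMatrix_apply, PmatX, Matrix.of_apply]
  refine Fin.lastCases ?_ (fun i => ?_) i
  · simp only [finRotate_last, Fin.ext_iff, Fin.val_last, Fin.val_zero]
    split_ifs <;> first | rfl | omega
  · simp only [finRotate_apply, Fin.coeSucc_eq_succ, Fin.ext_iff, Fin.val_succ, Fin.val_castSucc,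
      Fin.val_last]
    split_ifs <;> first | rfl | omega

/-- The weight of a step from `α` to `β`. With the convention `α_0 = c`, the vector `β` arises from
`(α_0, …, α_{t-1})` by lowering each `α_s` to some `β_{s+1}`, at a cost of
`C(α_s, β_{s+1}) a_s ^ (α_s - β_{s+1})`, and by lowering `α_t` to `β_{t+1} = 0`. The shifted vectors
are `src` and `tgt`; the truncation of `src s - tgt s` is harmless, since the binomial coefficient
vanishes when `src s < tgt s`. Up to the factor `k!`, these weights are the entries of `PiMat`. -/
def shiftWeight {S : Type*} [CommSemiring S] {t K : ℕ} (c : Fin (K + 1)) (a : Fin (t + 1) → S)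
    (α β : Fin t → Fin (K + 1)) : S :=
  let src : Fin (t + 1) → Fin (K + 1) := Fin.cons c α
  let tgt : Fin (t + 1) → Fin (K + 1) := Fin.snoc β 0
  ∏ s, ((src s : ℕ).choose (tgt s) : S) * a s ^ ((src s : ℕ) - tgt s)

theorem shiftWeight_succ {S : Type*} [CommSemiring S] {t K : ℕ} (c : Fin (K + 1))
    (a : Fin (t + 2) → S) (α β : Fin (t + 1) → Fin (K + 1)) :
    shiftWeight c a α β = ((c : ℕ).choose (β 0) : S) * a 0 ^ ((c : ℕ) - β 0) *
      (∏ i : Fin t, ((α i.castSucc : ℕ).choose (β i.succ) : S) *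
        a i.succ.castSucc ^ ((α i.castSucc : ℕ) - β i.succ)) *
      a (Fin.last (t + 1)) ^ (α (Fin.last t) : ℕ) := by
  simp only [shiftWeight, Fin.prod_univ_succ (n := t + 1), Fin.prod_univ_castSucc (n := t),
    Fin.succ_castSucc, Fin.succ_last, Fin.snoc_castSucc, Fin.snoc_last, ← Fin.castSucc_zero,
    Fin.cons_succ]
  simp [← mul_assoc]

theorem sum_mul_prod_range_pow {S : Type*} [CommSemiring S] {t K : ℕ} (c : Fin (K + 1))
    (b : Fin (t + 1) → S) (d : ℕ → S) :
    (∑ s, b s * ∏ u ∈ Finset.range s, d u) ^ (c : ℕ) =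
      ∑ v : Fin t → Fin (K + 1), shiftWeight c b v v * ∏ s : Fin t, d s ^ (v s : ℕ) := by
  induction t generalizing c d with
  | zero => simp [shiftWeight, Fin.snoc]
  | succ t ih =>
    have hstep : ∑ s, b s * ∏ u ∈ Finset.range s, d u =
        d 0 * (∑ s : Fin (t + 1), b s.succ * ∏ u ∈ Finset.range s, d (u + 1)) + b 0 := by
      simp only [Fin.sum_univ_succ (n := t + 1), Fin.val_zero, Fin.val_succ, Finset.prod_range_zero,
        Finset.prod_range_succ', Finset.mul_sum, mul_one]
      rw [add_comm]
      exact congrArg (· + b 0) (Finset.sum_congr rfl fun s _ => by ring)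
    have hbinom (x y : S) : (x + y) ^ (c : ℕ) =
        ∑ v : Fin (K + 1), x ^ (v : ℕ) * y ^ ((c : ℕ) - v) * ((c : ℕ).choose v : S) := by
      rw [add_pow, ← Finset.sum_range fun v => x ^ v * y ^ ((c : ℕ) - v) * ((c : ℕ).choose v : S)]
      refine Finset.sum_subset (Finset.range_subset_range.2 c.isLt) fun v _ hv => ?_
      rw [Nat.choose_eq_zero_of_lt (by simpa using hv), Nat.cast_zero, mul_zero]
    have hweight (v : Fin (K + 1)) (u : Fin t → Fin (K + 1)) :
        shiftWeight c b (Fin.cons v u) (Fin.cons v u) =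
          ((c : ℕ).choose v : S) * b 0 ^ ((c : ℕ) - v) * shiftWeight v (fun s => b s.succ) u u := by
      simp only [shiftWeight, Fin.prod_univ_succ, Fin.cons_zero, Fin.cons_succ,
        ← Fin.cons_snoc_eq_snoc_cons]
    rw [hstep, hbinom, ← (Fin.consEquiv fun _ : Fin (t + 1) => Fin (K + 1)).sum_comp,
      Fintype.sum_prod_type]
    refine Finset.sum_congr rfl fun v _ => ?_
    rw [mul_pow, ih v (fun s => b s.succ) fun u => d (u + 1), Finset.mul_sum, Finset.sum_mul,
      Finset.sum_mul]
    refine Finset.sum_congr rfl fun u _ => ?_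
    rw [show (Fin.consEquiv fun _ => Fin (K + 1)) (v, u) = Fin.cons v u from rfl, hweight]
    simp only [Fin.prod_univ_succ, Fin.cons_zero, Fin.cons_succ,
      Fin.val_zero, Fin.val_succ]
    ring

/-- The shear along the orbits of `τ`, which moves the `s`-th coordinates (counted from `1`) of a
family of vectors by `τ ^ s`. It turns the consecutive entries of one vector into entries of
vectors at consecutive points of an orbit. -/
def orbitShear {A V : Type*} (τ : Equiv.Perm A) (t : ℕ) : (A → Fin t → V) ≃ (A → Fin t → V) where
  toFun w i s := w ((τ ^ (s + 1 : ℕ)) i) s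
  invFun u j s := u ((τ ^ (s + 1 : ℕ)).symm j) s
  left_inv w := by ext; simp
  right_inv u := by ext; simp

theorem cons_orbitShear {A V : Type*} (τ : Equiv.Perm A) {t : ℕ} (c : V) (w : A → Fin t → V)
    (i : A) (s : Fin (t + 1)) :
    (Fin.cons c (orbitShear τ t w i) : Fin (t + 1) → V) s =
      (Fin.cons c (w ((τ ^ (s : ℕ)) i)) : Fin (t + 1) → V) s := by
  cases s using Fin.cases <;> simp [orbitShear]

theorem snoc_orbitShear {A V : Type*} (τ : Equiv.Perm A) {t : ℕ} (c : V) (w : A → Fin t → V)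
    (i : A) (s : Fin (t + 1)) :
    (Fin.snoc (orbitShear τ t w i) c : Fin (t + 1) → V) s =
      (Fin.snoc (w (τ ((τ ^ (s : ℕ)) i))) c : Fin (t + 1) → V) s := by
  cases s using Fin.lastCases <;> simp [orbitShear, pow_succ']

theorem prod_prod_perm_pow_apply {S A : Type*} [CommMonoid S] [Fintype A] (τ : Equiv.Perm A) {t : ℕ}
    (F : Fin t → A → S) : ∏ i, ∏ s : Fin t, F s ((τ ^ (s : ℕ)) i) = ∏ j, ∏ s, F s j := by
  rw [Finset.prod_comm, Finset.prod_comm (f := fun j s => F s j)]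
  exact Finset.prod_congr rfl fun s _ => Equiv.prod_comp (τ ^ (s : ℕ)) (F s)

theorem prod_shiftWeight_orbitShear {S A : Type*} [CommSemiring S] [Fintype A]
    (τ : Equiv.Perm A) {t K : ℕ} (c : Fin (K + 1)) (b : Fin (t + 1) → A → S)
    (w : A → Fin t → Fin (K + 1)) :
    ∏ i, shiftWeight c (fun s => b s ((τ ^ (s : ℕ)) i)) (orbitShear τ t w i) (orbitShear τ t w i) =
      ∏ j, shiftWeight c (fun s => b s j) (w j) (w (τ j)) := by
  simp only [shiftWeight, cons_orbitShear, snoc_orbitShear]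
  exact prod_prod_perm_pow_apply τ fun s j =>
    (((Fin.cons c (w j) : Fin (t + 1) → Fin (K + 1)) s : ℕ).choose
        ((Fin.snoc (w (τ j)) 0 : Fin (t + 1) → Fin (K + 1)) s) : S) *
      b s j ^ (((Fin.cons c (w j) : Fin (t + 1) → Fin (K + 1)) s : ℕ) -
        (Fin.snoc (w (τ j)) 0 : Fin (t + 1) → Fin (K + 1)) s)

theorem prod_sum_mul_prod_range_pow {S A : Type*} [CommSemiring S] [Fintype A] [DecidableEq A]
    (τ : Equiv.Perm A) {t K : ℕ} (c : Fin (K + 1)) (b : Fin (t + 1) → A → S) (d : A → S) :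
    ∏ i, (∑ s, b s ((τ ^ (s : ℕ)) i) * ∏ u ∈ Finset.range s, d ((τ ^ u) i)) ^ (c : ℕ) =
      ∑ w : A → Fin t → Fin (K + 1), ∏ j,
        shiftWeight c (fun s => b s j) (w j) (w (τ j)) * d j ^ ∑ s, (w (τ j) s : ℕ) := by
  have hd (w : A → Fin t → Fin (K + 1)) :
      ∏ i, ∏ s : Fin t, d ((τ ^ (s : ℕ)) i) ^ ((orbitShear τ t w i s : Fin (K + 1)) : ℕ) =
        ∏ j, d j ^ ∑ s, (w (τ j) s : ℕ) := by
    simp only [← Finset.prod_pow_eq_pow_sum, orbitShear, Equiv.coe_fn_mk, pow_succ',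
      Equiv.Perm.mul_apply]
    exact prod_prod_perm_pow_apply τ fun s j => d j ^ (w (τ j) s : ℕ)
  simp only [fun i => sum_mul_prod_range_pow c (fun s => b s ((τ ^ (s : ℕ)) i))
    fun u => d ((τ ^ u) i), Fintype.prod_sum]
  rw [← (orbitShear τ t).sum_comp]
  refine Finset.sum_congr rfl fun w _ => ?_
  rw [Finset.prod_mul_distrib, Finset.prod_mul_distrib, prod_shiftWeight_orbitShear, hd]

theorem map_shiftWeight {S S' : Type*} [CommSemiring S] [CommSemiring S'] (f : S →+* S') {t K : ℕ}
    (c : Fin (K + 1)) (a : Fin (t + 1) → S) (α β : Fin t → Fin (K + 1)) :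
    f (shiftWeight c a α β) = shiftWeight c (fun s => f (a s)) α β := by
  simp [shiftWeight]

theorem shiftWeight_mul_right {S : Type*} [CommSemiring S] {t K : ℕ}
    (c : Fin (K + 1)) (a : Fin (t + 1) → S) (y : S) (α β : Fin t → Fin (K + 1)) :
    shiftWeight c (fun s => a s * y) α β =
      shiftWeight c a α β * y ^ ((c : ℕ) + ∑ s, (α s : ℕ) - ∑ s, (β s : ℕ)) := by
  set src : Fin (t + 1) → Fin (K + 1) := Fin.cons c α with hsrc
  set tgt : Fin (t + 1) → Fin (K + 1) := Fin.snoc β 0 with htgt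
  simp only [shiftWeight, mul_pow, ← mul_assoc]
  rw [Finset.prod_mul_distrib, Finset.prod_pow_eq_pow_sum]
  by_cases h : ∀ s, tgt s ≤ src s
  · have hsum : ∑ s, ((src s : ℕ) - tgt s) = c + ∑ s, (α s : ℕ) - ∑ s, (β s : ℕ) := by
      rw [Finset.sum_tsub_distrib _ fun s _ => Fin.le_def.1 (h s), Fin.sum_univ_succ,
        Fin.sum_univ_castSucc (fun s => (tgt s : ℕ))]
      simp [hsrc, htgt]
    rw [← hsum]
  · obtain ⟨s, hs⟩ := not_forall.1 h
    have hzero : ∏ s, ((src s : ℕ).choose (tgt s) : S) * a s ^ ((src s : ℕ) - tgt s) = 0 := by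
      refine Finset.prod_eq_zero (Finset.mem_univ s) ?_
      rw [Nat.choose_eq_zero_of_lt (not_le.1 hs), Nat.cast_zero, zero_mul]
    rw [hzero, zero_mul, zero_mul]

-- For `k = 0` the subtraction is truncated, but then every entry of `α` and `β` is `0`.
theorem add_sum_sub_sum_eq_left_iff {k t : ℕ} (α β : Fin t → Fin (k + 1)) :
    k + ∑ s, (α s : ℕ) - ∑ s, (β s : ℕ) = k ↔ ∑ s, (β s : ℕ) = ∑ s, (α s : ℕ) := by
  rcases k.eq_zero_or_pos with rfl | hk
  · simp [Fin.val_eq_zero]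
  · omega

section MonomialMatrix

open MvPolynomial

variable {S A : Type*} [Fintype A]

theorem coeff_prod_C_mul_X_pow [CommSemiring S] (c : A → S) (e : A → ℕ) (n : A →₀ ℕ) :
    (∏ j, C (c j) * X j ^ e j).coeff n = if ∀ j, e j = n j then ∏ j, c j else 0 := by
  simp only [C_mul_X_pow_eq_monomial, ← monomial_sum_prod, coeff_monomial, Finsupp.ext_iff,
    Finsupp.finsetSum_apply, Finsupp.single_apply, Finset.sum_ite_eq', Finset.mem_univ, if_true]

theorem linearForm_sum_pow_diagonal_mul_permMatrix [CommSemiring S] [DecidableEq A]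
    (d : A → S) (τ : Equiv.Perm A) (a : ℕ → S) (t : ℕ) (i : A) :
    ∑ j, C ((∑ s ∈ Finset.range (t + 1),
        a s • (Matrix.diagonal d * τ.permMatrix S) ^ s) i j) * X j =
      ∑ s : Fin (t + 1), C (a s) * X ((τ ^ (s : ℕ)) i) *
        ∏ u ∈ Finset.range s, C (d ((τ ^ u) i)) := by
  simp only [Matrix.sum_apply, Matrix.smul_apply, diagonal_mul_permMatrix_pow,
    diagonal_mul_permMatrix_apply, map_sum, Finset.sum_mul]
  rw [Finset.sum_comm, Finset.sum_range]
  refine Finset.sum_congr rfl fun s _ => ?_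
  rw [Finset.sum_eq_single_of_mem ((τ ^ (s : ℕ)) i) (Finset.mem_univ _)
    fun j _ hj => by simp [hj.symm]]
  simp [mul_right_comm]

theorem sqPer_sum_pow_diagonal_mul_permMatrix_kronecker_ones [CommRing S] [DecidableEq A]
    (d : A → S) (τ : Equiv.Perm A) (a : ℕ → S) (k t : ℕ) :
    sqPer ((∑ s ∈ Finset.range (t + 1), a s • (Matrix.diagonal d * τ.permMatrix S) ^ s) ⊗ₖ
        Matrix.of fun (_ : Fin k) (_ : Fin k) => (1 : S)) =
      (k.factorial : S) ^ Fintype.card A * ∑ w : A → Fin t → Fin (k + 1),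
        if ∀ j, ∑ s, (w (τ j) s : ℕ) = ∑ s, (w j s : ℕ) then
          ∏ j, shiftWeight (Fin.last k) (fun s => a s) (w j) (w (τ j)) *
            d j ^ ∑ s, (w (τ j) s : ℕ)
        else 0 := by
  have hexpand := prod_sum_mul_prod_range_pow τ (Fin.last k)
    (fun (s : Fin (t + 1)) j => C (a s) * X j) fun j => C (d j)
  rw [Fin.val_last] at hexpand
  simp only [sqPer_kronecker_ones, linearForm_sum_pow_diagonal_mul_permMatrix, hexpand, coeff_sum]
  congr 1
  refine Finset.sum_congr rfl fun w _ => ?_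
  simp only [shiftWeight_mul_right, ← map_shiftWeight, mul_right_comm, ← map_pow, ← map_mul,
    coeff_prod_C_mul_X_pow, Fin.val_last, Finsupp.equivFunOnFinite_symm_apply_apply,
    add_sum_sub_sum_eq_left_iff]

end MonomialMatrix

theorem sum_ite_add_eq_choose_mul_pow {S : Type*} [CommSemiring S] {k : ℕ} (x y : Fin (k + 1))
    (b : S) :
    (∑ p : Fin (k + 1), if (p : ℕ) + y = x then ((x : ℕ).choose p : S) * b ^ (p : ℕ) else 0) =
      ((x : ℕ).choose y : S) * b ^ ((x : ℕ) - y) := by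
  rcases le_or_gt y x with h | h
  · rw [Finset.sum_eq_single_of_mem (⟨x - y, by omega⟩ : Fin (k + 1)) (Finset.mem_univ _)
      fun p _ hp => if_neg fun hpy => hp (Fin.ext (by simp only; omega))]
    rw [if_pos (Nat.sub_add_cancel h), Nat.choose_symm h]
  · rw [Nat.choose_eq_zero_of_lt h, Nat.cast_zero, zero_mul]
    exact Finset.sum_eq_zero fun p _ => if_neg (by have := Fin.lt_def.1 h; omega)

theorem prod_choose_mul_pow_eq_sum {ι S : Type*} [Fintype ι] [DecidableEq ι] [CommSemiring S]
    {k : ℕ} (x y : ι → Fin (k + 1)) (b : ι → S) :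
    ∏ i, ((x i : ℕ).choose (y i) : S) * b i ^ ((x i : ℕ) - y i) =
      ∑ p : ι → Fin (k + 1), if ∀ i, (p i : ℕ) + y i = x i then
        ∏ i, ((x i : ℕ).choose (p i) : S) * b i ^ (p i : ℕ) else 0 := by
  simp only [← sum_ite_add_eq_choose_mul_pow, Fintype.prod_sum, Fintype.prod_ite_zero]

theorem piMat_succ_apply {R : Type*} [CommRing R] (k t r : ℕ) (a : ℕ → R)
    (α β : GIdx k r (t + 1)) :
    PiMat k (t + 1) r a α β = ∑ p : Fin t → Fin (k + 1),
      if (∀ i, (p i : ℕ) ≤ α.1 i.castSucc) ∧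
          (α.1 (Fin.last t) : ℕ) + ∑ i, (p i : ℕ) ≤ k ∧
          (β.1 0 : ℕ) = α.1 (Fin.last t) + ∑ i, (p i : ℕ) ∧
          ∀ i : Fin t, (β.1 i.succ : ℕ) = α.1 i.castSucc - p i then
        (k.factorial : R) * (k.choose (α.1 (Fin.last t) + ∑ i, (p i : ℕ)) : R) *
          (∏ i : Fin t, ((α.1 i.castSucc : ℕ).choose (p i) : R)) *
          a 0 ^ (k - α.1 (Fin.last t) - ∑ i, (p i : ℕ)) *
          (∏ i : Fin t, a (i + 1) ^ (p i : ℕ)) * a (t + 1) ^ (α.1 (Fin.last t) : ℕ)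
      else 0 := by
  simp only [PiMat, Matrix.of_apply]
  rw [dif_pos t.succ_pos, ← (Fin.snocEquiv fun _ : Fin (t + 1) => Fin (k + 1)).sum_comp,
    Fintype.sum_prod_type_right]
  refine Finset.sum_congr rfl fun p _ => ?_
  rw [Finset.sum_eq_single_of_mem (0 : Fin (k + 1)) (Finset.mem_univ _)]
  · have hshift : (∀ j : Fin (t + 1), 0 < j.val →
        (β.1 j : ℕ) = α.1 ⟨j - 1, by omega⟩ -
          (Fin.snoc p 0 : Fin (t + 1) → Fin (k + 1)) ⟨j - 1, by omega⟩) ↔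
        ∀ i : Fin t, (β.1 i.succ : ℕ) = α.1 i.castSucc - p i := by
      refine Fin.forall_fin_succ.trans ((and_iff_right (by simp)).trans (forall_congr' fun i => ?_))
      rw [← Fin.snoc_castSucc (α := fun _ => Fin (k + 1)) 0 p i]
      exact ⟨fun h => h i.succ_pos, fun h _ => h⟩
    have hlast (h : t + 1 - 1 < t + 1) : (⟨t + 1 - 1, h⟩ : Fin (t + 1)) = Fin.last t := rfl
    simp only [Fin.snocEquiv, Equiv.coe_fn_mk, hshift, hlast]
    simp [Fin.sum_univ_castSucc, Fin.prod_univ_castSucc, Fin.forall_fin_succ']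
  · rintro q - hq
    refine if_neg fun h => hq (Fin.ext ?_)
    simpa [Fin.snocEquiv] using h.2.1 (Fin.last t)

theorem shift_conditions_iff_forall_add_eq {k r t : ℕ} (α β : GIdx k r (t + 1))
    (p : Fin t → Fin (k + 1)) :
    ((∀ i, (p i : ℕ) ≤ α.1 i.castSucc) ∧
        (α.1 (Fin.last t) : ℕ) + ∑ i, (p i : ℕ) ≤ k ∧
        (β.1 0 : ℕ) = α.1 (Fin.last t) + ∑ i, (p i : ℕ) ∧
        ∀ i : Fin t, (β.1 i.succ : ℕ) = α.1 i.castSucc - p i) ↔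
      ∀ i : Fin t, (p i : ℕ) + β.1 i.succ = α.1 i.castSucc := by
  refine ⟨fun ⟨hp, _, _, hβ⟩ i => by rw [hβ, Nat.add_sub_cancel' (hp i)], fun h => ?_⟩
  have hzero : (β.1 0 : ℕ) = α.1 (Fin.last t) + ∑ i, (p i : ℕ) := by
    have hα := α.2
    have hβ := β.2
    rw [Fin.sum_univ_castSucc, ← Finset.sum_congr rfl fun i _ => h i, Finset.sum_add_distrib] at hα
    rw [Fin.sum_univ_succ] at hβ
    omega
  exact ⟨fun i => by have := h i; omega, hzero ▸ Fin.is_le _, hzero, fun i => by have := h i; omega⟩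

theorem piMat_apply {R : Type*} [CommRing R] (k t r : ℕ) (a : ℕ → R) (α β : GIdx k r t) :
    PiMat k t r a α β = (k.factorial : R) * shiftWeight (Fin.last k) (fun s => a s) α.1 β.1 := by
  cases t with
  | zero => simp [PiMat, shiftWeight, Fin.snoc]
  | succ t =>
    rw [shiftWeight_succ, Fin.val_last, prod_choose_mul_pow_eq_sum, piMat_succ_apply,
      Finset.mul_sum, Finset.sum_mul, Finset.mul_sum]
    refine Finset.sum_congr rfl fun p _ => ?_
    simp only [shift_conditions_iff_forall_add_eq]
    split_ifs with h
    · rw [Nat.sub_sub, ← ((shift_conditions_iff_forall_add_eq α β p).2 h).2.2.1,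
        Finset.prod_mul_distrib]
      simp only [Fin.val_zero, Fin.val_castSucc, Fin.val_succ, Fin.val_last]
      ring
    · simp

theorem trace_piMat_pow_succ {R : Type*} [CommRing R] (k t r m : ℕ) (a : ℕ → R) :
    (PiMat k t r a ^ (m + 1)).trace = (k.factorial : R) ^ (m + 1) *
      ∑ w : Fin (m + 1) → Fin t → Fin (k + 1), if ∀ j, ∑ i, (w j i : ℕ) = r then
        ∏ j, shiftWeight (Fin.last k) (fun s => a s) (w j) (w (finRotate (m + 1) j)) else 0 := by
  simp only [trace_pow_succ_eq_sum_closed_walks, piMat_apply, Finset.prod_mul_distrib,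
    Finset.prod_const, Finset.card_univ, Fintype.card_fin, ← Finset.mul_sum]
  rw [← Finset.sum_filter]
  congr 1
  exact Finset.sum_bij' (fun w _ j => (w j).1)
    (fun w hw j => ⟨w j, (Finset.mem_filter.1 hw).2 j⟩)
    (fun w _ => Finset.mem_filter.2 ⟨Finset.mem_univ _, fun j => (w j).2⟩)
    (fun _ _ => Finset.mem_univ _) (fun _ _ => rfl) (fun _ _ => rfl) (fun _ _ => rfl)

theorem forall_finRotate_eq_iff {V : Type*} {m : ℕ} (f : Fin (m + 1) → V) :
    (∀ j, f (finRotate (m + 1) j) = f j) ↔ ∀ j, f j = f 0 := by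
  refine ⟨fun h j => ?_, fun h j => (h _).trans (h j).symm⟩
  induction j using Fin.induction with
  | zero => rfl
  | succ j ih => rw [← ih, ← h j.castSucc, finRotate_apply, Fin.coeSucc_eq_succ]

theorem sqPer_sum_pmatX_pow_kronecker_ones {S : Type*} [CommRing S] (a : ℕ → S) (x : S)
    (k t m : ℕ) :
    sqPer ((∑ s ∈ Finset.range (t + 1), a s • PmatX (m + 1) x ^ s) ⊗ₖ
        Matrix.of fun (_ : Fin k) (_ : Fin k) => (1 : S)) =
      (k.factorial : S) ^ (m + 1) * ∑ w : Fin (m + 1) → Fin t → Fin (k + 1),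
        if ∀ j, ∑ i, (w j i : ℕ) = ∑ i, (w 0 i : ℕ) then
          (∏ j, shiftWeight (Fin.last k) (fun s => a s) (w j) (w (finRotate (m + 1) j))) *
            x ^ ∑ i, (w 0 i : ℕ)
        else 0 := by
  rw [pmatX_succ_eq_diagonal_mul_permMatrix,
    sqPer_sum_pow_diagonal_mul_permMatrix_kronecker_ones, Fintype.card_fin]
  simp only [fun w : Fin (m + 1) → Fin t → Fin (k + 1) =>
    forall_finRotate_eq_iff fun j => ∑ i, (w j i : ℕ), Finset.prod_mul_distrib, ite_pow, one_pow,
    Finset.prod_ite_eq', Finset.mem_univ, if_true, finRotate_last]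

theorem stmt17 {R : Type*} [CommRing R] (k t n : ℕ) (hk : 1 ≤ k) (hn : 1 ≤ n)
    (a : ℕ → R) :
    sqPer ((∑ i ∈ Finset.range (t + 1),
          Polynomial.C (a i) • (PmatX n (Polynomial.X : Polynomial R)) ^ i) ⊗ₖ
        (Matrix.of fun (_ : Fin k) (_ : Fin k) => (1 : Polynomial R))) =
      ∑ r ∈ Finset.range (k * t + 1),
        Polynomial.C (Matrix.trace ((PiMat k t r a) ^ n)) * Polynomial.X ^ r := by
  obtain ⟨m, rfl⟩ : ∃ m, n = m + 1 := ⟨n - 1, by omega⟩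
  have hmem (w : Fin (m + 1) → Fin t → Fin (k + 1)) :
      ∑ i, (w 0 i : ℕ) ∈ Finset.range (k * t + 1) := by
    rw [Finset.mem_range, Nat.lt_succ_iff, mul_comm]
    simpa using Finset.sum_le_card_nsmul Finset.univ _ k fun i _ => Fin.is_le (w 0 i)
  rw [sqPer_sum_pmatX_pow_kronecker_ones]
  simp only [trace_piMat_pow_succ, map_mul, map_pow, map_natCast, map_sum, mul_assoc,
    ← Finset.mul_sum, Finset.sum_mul]
  rw [Finset.sum_comm]
  refine congrArg _ (Finset.sum_congr rfl fun w _ => ?_)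
  rw [Finset.sum_eq_single_of_mem _ (hmem w) fun r _ hr => by
    rw [if_neg fun h => hr (h 0).symm, map_zero, zero_mul]]
  split_ifs <;> simp [map_shiftWeight]
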